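/- For every ε > 0 there exist constants c > 0 and C > 0 such that for all natural numbers M and all R with 1 ≤ R ≤ M the following holds. Let N_R be the number of M×M matrices over ZMod 2 of rank R. Then the number of M×M matrices Z over ZMod 2 with rank(Z) = R such that every row and every column of Z has at most c·M nonzero entries is at most C · (2:ℝ)^(R² − 2(1−ε)·M·R) · N_R. -/

import Mathlib

open Matrix

/-! A matrix of rank `R` is determined by the positions and contents of `R` rows spanning its row
space and of `R` columns spanning its column space. Over a field with `q` elements, at most
`(m |T| · n |S|) ^ R` matrices of size `m × n` and rank `R` therefore have their rows in the
Hamming ball `S` and their columns in the Hamming ball `T`. If the relative radius of the balls is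
small, then `2 n |S| ≤ q ^ (ε n)` and `2 m |T| ≤ q ^ (ε m)`, unless a radius is below `1`, which
forces the matrix to vanish. Conversely, extending `R` independent rows by arbitrary combinations
of them gives at least `2 ^ (-R) * q ^ ((m + n) R - R ^ 2)` matrices of rank `R`. -/

section RowsAndColumns

variable {m n r s K : Type*}

lemma eq_of_submatrix_rows_eq_of_submatrix_cols_eq [Semiring K] [Fintype r] [Fintype s]
    {Z Z' : Matrix m n K} {I : r → m} {J : s → n} {A : Matrix m r K} {B : Matrix s n K}
    (hZ : Z = A * Z.submatrix I id) (hZ' : Z' = Z'.submatrix id J * B)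
    (hrows : Z.submatrix I id = Z'.submatrix I id)
    (hcols : Z.submatrix id J = Z'.submatrix id J) : Z = Z' :=
  calc Z = A * (Z'.submatrix id J * B).submatrix I id := by rw [← hZ', ← hrows, ← hZ]
    _ = (A * Z.submatrix I id).submatrix id J * B := by
      rw [submatrix_mul _ _ I id id Function.bijective_id,
        submatrix_mul _ _ id id J Function.bijective_id, Matrix.mul_assoc, hrows]
      rfl
    _ = Z' := by rw [← hZ, hcols, ← hZ']

lemma exists_eq_mul_submatrix_rows [Field K] [Finite m] [Fintype n] (Z : Matrix m n K) :
    ∃ (I : Fin Z.rank → m) (A : Matrix m (Fin Z.rank) K), Z = A * Z.submatrix I id := by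
  rw [rank_eq_finrank_span_row]
  obtain ⟨v, hv, hspan, -⟩ := Submodule.exists_fun_fin_finrank_span_eq K (Set.range Z.row)
  choose I hI using hv
  have hmem (i : m) : Z.row i ∈ Submodule.span K (Set.range v) := by
    rw [hspan]
    exact Submodule.subset_span ⟨i, rfl⟩
  choose A hA using fun i ↦ (Submodule.mem_span_range_iff_exists_fun K).1 (hmem i)
  refine ⟨I, of A, ext fun i j ↦ ?_⟩
  simpa [← hI, mul_apply] using (congrFun (hA i) j).symm

lemma exists_eq_submatrix_cols_mul [Field K] [Finite m] [Fintype n] (Z : Matrix m n K) :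
    ∃ (J : Fin Z.rank → n) (B : Matrix (Fin Z.rank) n K), Z = Z.submatrix id J * B := by
  have := Fintype.ofFinite m
  rw [← rank_transpose]
  obtain ⟨J, A, hA⟩ := exists_eq_mul_submatrix_rows Zᵀ
  exact ⟨J, Aᵀ, by simpa using congrArg transpose hA⟩

lemma card_rank_eq_rows_mem_cols_mem_le [Field K] [Finite K] [Finite m] [Fintype n]
    (S : Set (n → K)) (T : Set (m → K)) (R : ℕ) :
    Nat.card {Z : Matrix m n K // Z.rank = R ∧ (∀ i, Z.row i ∈ S) ∧ ∀ j, Z.col j ∈ T} ≤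
      (Nat.card m * Nat.card T * (Nat.card n * Nat.card S)) ^ R := by
  have hfactor (Z : {Z : Matrix m n K // Z.rank = R ∧ (∀ i, Z.row i ∈ S) ∧ ∀ j, Z.col j ∈ T}) :
      ∃ (I : Fin R → m) (J : Fin R → n),
        (∃ A, Z.1 = A * Z.1.submatrix I id) ∧ ∃ B, Z.1 = Z.1.submatrix id J * B := by
    obtain ⟨Z, rfl, -⟩ := Z
    obtain ⟨I, hI⟩ := exists_eq_mul_submatrix_rows Z
    obtain ⟨J, hJ⟩ := exists_eq_submatrix_cols_mul Z
    exact ⟨I, J, hI, hJ⟩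
  choose I J hI hJ using hfactor
  let rowsAndCols (Z : {Z : Matrix m n K //
      Z.rank = R ∧ (∀ i, Z.row i ∈ S) ∧ ∀ j, Z.col j ∈ T}) :
      ((Fin R → m) × (Fin R → T)) × ((Fin R → n) × (Fin R → S)) :=
    ((I Z, fun k ↦ ⟨_, Z.2.2.2 (J Z k)⟩), (J Z, fun k ↦ ⟨_, Z.2.2.1 (I Z k)⟩))
  have hinj : Function.Injective rowsAndCols := by
    intro Z Z' h
    simp only [rowsAndCols, Prod.mk.injEq] at h
    obtain ⟨⟨hIeq, hcols⟩, hJeq, hrows⟩ := h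
    obtain ⟨A, hA⟩ := hI Z
    obtain ⟨B, hB⟩ := hJ Z'
    rw [← hJeq] at hB
    refine Subtype.ext (eq_of_submatrix_rows_eq_of_submatrix_cols_eq hA hB ?_ ?_)
    · ext k j
      simpa [hIeq] using congrFun (congrArg Subtype.val (congrFun hrows k)) j
    · ext i k
      simpa [hJeq] using congrFun (congrArg Subtype.val (congrFun hcols k)) i
  calc _ ≤ Nat.card (((Fin R → m) × (Fin R → T)) × ((Fin R → n) × (Fin R → S))) :=
        Nat.card_le_card_of_injective rowsAndCols hinj
    _ = _ := by simp only [Nat.card_prod, Nat.card_fun, Nat.card_fin, mul_pow]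

end RowsAndColumns

section RankCount

variable {r k n K : Type*} [Field K]

lemma rank_fromRows_mul_self [Fintype r] [Fintype n] {A : Matrix r n K}
    (hA : LinearIndependent K A.row) (B : Matrix k r K) :
    (fromRows A (B * A)).rank = Fintype.card r := by
  classical
  rw [← hA.rank_matrix]
  refine le_antisymm ?_ (rank_submatrix_le (fromRows A (B * A)) Sum.inl id)
  calc (fromRows A (B * A)).rank = (fromRows 1 B * A).rank := by
        rw [fromRows_mul, Matrix.one_mul]
    _ ≤ A.rank := rank_mul_le_right _ _

lemma card_linearIndependent_rows_mul_card_le [Finite K] [Fintype r] [Finite k] [Fintype n] :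
    Nat.card {A : Matrix r n K // LinearIndependent K A.row} * Nat.card (Matrix k r K) ≤
      Nat.card {Z : Matrix (r ⊕ k) n K // Z.rank = Fintype.card r} := by
  rw [← Nat.card_prod]
  refine Nat.card_le_card_of_injective
    (fun p ↦ ⟨fromRows p.1.1 (p.2 * p.1.1), rank_fromRows_mul_self p.1.2 p.2⟩) ?_
  rintro ⟨⟨A, hA⟩, B⟩ ⟨⟨A', hA'⟩, B'⟩ h
  obtain ⟨rfl, hmul⟩ := fromRows_inj (congrArg Subtype.val h)
  have hB : B = B' := funext fun i ↦ vecMul_injective_iff.2 hA (congrFun hmul i)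
  rw [hB]

lemma pow_le_two_pow_mul_prod_pow_sub_pow {q n R : ℕ} (hq : 2 ≤ q) (hR : R ≤ n) :
    (q ^ n) ^ R ≤ 2 ^ R * ∏ i : Fin R, (q ^ n - q ^ (i : ℕ)) := by
  have hfactor (i : Fin R) : q ^ n ≤ 2 * (q ^ n - q ^ (i : ℕ)) := by
    have : q ^ (i : ℕ) * 2 ≤ q ^ n :=
      calc q ^ (i : ℕ) * 2 ≤ q ^ (i + 1 : ℕ) := by rw [pow_succ]; gcongr
        _ ≤ q ^ n := Nat.pow_le_pow_right (by lia) (by lia)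
    lia
  simpa [Finset.prod_mul_distrib] using
    Finset.prod_le_prod' fun (i : Fin R) (_ : i ∈ Finset.univ) ↦ hfactor i

lemma card_pow_le_mul_card_rank_eq [Fintype K] {m n R : ℕ} (hm : R ≤ m) (hn : R ≤ n) :
    Fintype.card K ^ ((m + n) * R) ≤ 2 ^ R * Fintype.card K ^ R ^ 2 *
      Nat.card {Z : Matrix (Fin m) (Fin n) K // Z.rank = R} := by
  obtain ⟨k, rfl⟩ := Nat.exists_eq_add_of_le hm
  set q := Fintype.card K
  have hindep : Nat.card {A : Matrix (Fin R) (Fin n) K // LinearIndependent K A.row} =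
      ∏ i : Fin R, (q ^ n - q ^ (i : ℕ)) := by
    have := card_linearIndependent (K := K) (V := Fin n → K) (k := R) (by simpa using hn)
    rwa [Module.finrank_fin_fun] at this
  have hfree : Nat.card (Matrix (Fin k) (Fin R) K) = q ^ (k * R) := by
    simp [Matrix, q, ← pow_mul, mul_comm]
  have hreindex : Nat.card {Z : Matrix (Fin R ⊕ Fin k) (Fin n) K // Z.rank = R} =
      Nat.card {Z : Matrix (Fin (R + k)) (Fin n) K // Z.rank = R} :=
    Nat.card_congr <| (reindex finSumFinEquiv (Equiv.refl _)).subtypeEquiv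
      fun Z ↦ by rw [rank_reindex]
  have hextend := card_linearIndependent_rows_mul_card_le
    (K := K) (r := Fin R) (k := Fin k) (n := Fin n)
  rw [Fintype.card_fin, hindep, hfree, hreindex] at hextend
  calc q ^ ((R + k + n) * R) = q ^ R ^ 2 * ((q ^ n) ^ R * q ^ (k * R)) := by ring
    _ ≤ q ^ R ^ 2 * (2 ^ R * (∏ i : Fin R, (q ^ n - q ^ (i : ℕ))) * q ^ (k * R)) := by
      gcongr
      exact pow_le_two_pow_mul_prod_pow_sub_pow Fintype.one_lt_card hn
    _ = 2 ^ R * q ^ R ^ 2 * ((∏ i : Fin R, (q ^ n - q ^ (i : ℕ))) * q ^ (k * R)) := by ring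
    _ ≤ _ := by gcongr

end RankCount

section HammingBall

variable {ι α : Type*} [Fintype ι] [Zero α] [DecidableEq α]

/-- The Hamming ball of radius `t` centred at the zero vector. The radius is real so that it can be
a fixed proportion of the length. -/
def hammingBall (ι α : Type*) [Fintype ι] [Zero α] [DecidableEq α] (t : ℝ) : Set (ι → α) :=
  {v | (hammingNorm v : ℝ) ≤ t}

lemma eq_zero_of_mem_hammingBall_of_lt_one {v : ι → α} {t : ℝ} (hv : v ∈ hammingBall ι α t)
    (ht : t < 1) : v = 0 :=
  hammingNorm_lt_one.1 <| by exact_mod_cast lt_of_le_of_lt hv ht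

lemma card_hammingBall_mono [Finite α] {s t : ℝ} (hst : s ≤ t) :
    Nat.card (hammingBall ι α s) ≤ Nat.card (hammingBall ι α t) :=
  Nat.card_mono (Set.toFinite _) fun _ hv ↦ le_trans hv hst

lemma sum_pow_hammingNorm [DecidableEq ι] [Fintype α] {A : Type*} [CommRing A] (x : A) :
    ∑ v : ι → α, x ^ hammingNorm v = (1 + (Fintype.card α - 1) * x) ^ Fintype.card ι := by
  have hletter : ∑ a : α, (if a ≠ 0 then x else 1) = 1 + (Fintype.card α - 1) * x := by
    rw [← Finset.add_sum_erase _ _ (Finset.mem_univ 0),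
      Finset.sum_congr rfl fun a ha ↦ if_pos (Finset.ne_of_mem_erase ha)]
    simp [Finset.card_erase_of_mem, Nat.cast_sub Fintype.card_pos]
  calc ∑ v : ι → α, x ^ hammingNorm v = ∑ v : ι → α, ∏ i, (if v i ≠ 0 then x else 1) := by
        simp [hammingNorm, Finset.prod_ite]
    _ = ∏ _i : ι, ∑ a : α, (if a ≠ 0 then x else 1) :=
      (Fintype.prod_sum fun (_ : ι) (a : α) ↦ if a ≠ 0 then x else 1).symm
    _ = _ := by rw [hletter, Finset.prod_const, Finset.card_univ]

lemma card_hammingBall_mul_rpow_le [Fintype α] {x : ℝ} (hx : 0 < x) (hx1 : x ≤ 1) (t : ℝ) :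
    Nat.card (hammingBall ι α t) * x ^ t ≤
      (1 + (Fintype.card α - 1) * x) ^ Fintype.card ι := by
  classical
  calc (Nat.card (hammingBall ι α t) : ℝ) * x ^ t
      = ∑ v : ι → α with v ∈ hammingBall ι α t, x ^ t := by
        rw [Finset.sum_const, nsmul_eq_mul, Nat.card_eq_fintype_card, Fintype.card_subtype]
    _ ≤ ∑ v : ι → α with v ∈ hammingBall ι α t, x ^ hammingNorm v := by
      refine Finset.sum_le_sum fun v hv ↦ ?_
      rw [← Real.rpow_natCast]
      exact Real.rpow_le_rpow_of_exponent_ge hx hx1 (Finset.mem_filter.1 hv).2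
    _ ≤ ∑ v : ι → α, x ^ hammingNorm v :=
      Finset.sum_le_sum_of_subset_of_nonneg (Finset.filter_subset _ _) fun _ _ _ ↦ by positivity
    _ = _ := sum_pow_hammingNorm x

end HammingBall

section SmallRadius

open Filter Topology

variable (α : Type*) [Zero α] [DecidableEq α] [Finite α] {b : ℝ}

lemma exists_card_hammingBall_le_pow (hb : 1 < b) : ∃ c : ℝ, 0 < c ∧
    ∀ n : ℕ, (Nat.card (hammingBall (Fin n) α (c * n)) : ℝ) ≤ b ^ n := by
  have := Fintype.ofFinite α
  have hx_tendsto : Tendsto (fun x : ℝ ↦ 1 + (Fintype.card α - 1) * x) (𝓝[>] 0) (𝓝 1) :=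
    tendsto_nhdsWithin_of_tendsto_nhds <| Continuous.tendsto' (by fun_prop) _ _ (by simp)
  obtain ⟨x, hxb, hx, hx1⟩ := ((hx_tendsto.eventually_lt_const hb).and
    (Ioo_mem_nhdsGT zero_lt_one)).exists
  have hc_tendsto : Tendsto (fun c : ℝ ↦ b * x ^ c) (𝓝[>] 0) (𝓝 b) :=
    tendsto_nhdsWithin_of_tendsto_nhds <| Continuous.tendsto'
      (continuous_const.mul (Real.continuous_const_rpow hx.ne')) _ _ (by simp)
  obtain ⟨c, hcx, hc⟩ := ((hc_tendsto.eventually_const_lt hxb).and self_mem_nhdsWithin).exists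
  refine ⟨c, hc, fun n ↦ le_of_mul_le_mul_right ?_ (Real.rpow_pos_of_pos hx (c * n))⟩
  have hbase : 0 ≤ 1 + ((Fintype.card α : ℝ) - 1) * x := by
    have : (1 : ℝ) ≤ Fintype.card α := by exact_mod_cast Fintype.card_pos
    nlinarith
  calc _ ≤ (1 + ((Fintype.card α : ℝ) - 1) * x) ^ n := by
        simpa using card_hammingBall_mul_rpow_le (ι := Fin n) (α := α) hx hx1.le (c * n)
    _ ≤ (b * x ^ c) ^ n := by gcongr
    _ = b ^ n * x ^ (c * n) := by rw [mul_pow, Real.rpow_mul hx.le, Real.rpow_natCast]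

lemma exists_two_mul_card_hammingBall_le_pow (hb : 1 < b) : ∃ c : ℝ, 0 < c ∧
    ∀ n : ℕ, 1 ≤ c * n → 2 * (n * Nat.card (hammingBall (Fin n) α (c * n)) : ℝ) ≤ b ^ n := by
  have hsqrt : 1 < √b := Real.lt_sqrt_of_sq_lt (by simpa using hb)
  obtain ⟨c, hc, hball⟩ := exists_card_hammingBall_le_pow α hsqrt
  obtain ⟨N, hN⟩ := eventually_atTop.1 <|
    (tendsto_pow_const_div_const_pow_of_one_lt 1 hsqrt).eventually_le_const
      (show (0 : ℝ) < 1 / 2 by norm_num)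
  refine ⟨min c (1 / (N + 1)), by positivity, fun n hn ↦ ?_⟩
  have hNn : N ≤ n := by
    have : (1 : ℝ) ≤ 1 / (N + 1) * n := hn.trans (by gcongr; exact min_le_right _ _)
    rw [one_div_mul_eq_div, one_le_div₀ (by positivity)] at this
    exact_mod_cast (lt_add_one _).le.trans this
  have hlinear : 2 * (n : ℝ) ≤ √b ^ n := by
    have := hN n hNn
    rw [pow_one, div_le_iff₀ (by positivity)] at this
    linarith
  have hmono : (Nat.card (hammingBall (Fin n) α (min c (1 / (N + 1)) * n)) : ℝ) ≤ √b ^ n := by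
    refine le_trans ?_ (hball n)
    exact_mod_cast card_hammingBall_mono (by gcongr; exact min_le_left _ _)
  calc _ = 2 * (n : ℝ) * Nat.card (hammingBall (Fin n) α (min c (1 / (N + 1)) * n)) := by ring
    _ ≤ √b ^ n * √b ^ n := by gcongr
    _ = b ^ n := by rw [← mul_pow, Real.mul_self_sqrt (by linarith)]

end SmallRadius

section LowWeight

variable {α : Type*} [Zero α] [DecidableEq α] {m n : ℕ} {c : ℝ}

/-- The uniform low weight condition with constant `c`: rows of the `m × n` matrix `Z` have
weight at most `c * n`, and columns have weight at most `c * m`. -/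
def UniformLowWeight (c : ℝ) (Z : Matrix (Fin m) (Fin n) α) : Prop :=
  (∀ i, Z.row i ∈ hammingBall (Fin n) α (c * n)) ∧ ∀ j, Z.col j ∈ hammingBall (Fin m) α (c * m)

lemma UniformLowWeight.one_le_mul_of_ne_zero {Z : Matrix (Fin m) (Fin n) α}
    (hZ : UniformLowWeight c Z) (hZ0 : Z ≠ 0) : 1 ≤ c * m ∧ 1 ≤ c * n := by
  contrapose! hZ0
  rcases lt_or_ge (c * m) 1 with hm | hm
  · ext i j
    exact congrFun (eq_zero_of_mem_hammingBall_of_lt_one (hZ.2 j) hm) i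
  · ext i j
    exact congrFun (eq_zero_of_mem_hammingBall_of_lt_one (hZ.1 i) (hZ0 hm)) j

lemma exists_two_pow_mul_card_rank_eq_uniformLowWeight_le (K : Type*) [Field K] [DecidableEq K]
    [Finite K] {b : ℝ} (hb : 1 < b) : ∃ c : ℝ, 0 < c ∧ ∀ m n R : ℕ,
      2 ^ R * (Nat.card {Z : Matrix (Fin m) (Fin n) K // Z.rank = R ∧ UniformLowWeight c Z} : ℝ) ≤
        b ^ ((m + n) * R) := by
  obtain ⟨c, hc, hball⟩ := exists_two_mul_card_hammingBall_le_pow K hb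
  refine ⟨c, hc, fun m n R ↦ ?_⟩
  set B : ℕ → ℕ := fun l ↦ Nat.card (hammingBall (Fin l) K (c * l))
  have hcount :
      (Nat.card {Z : Matrix (Fin m) (Fin n) K // Z.rank = R ∧ UniformLowWeight c Z} : ℝ) ≤
        (m * B m * (n * B n)) ^ R := by
    exact_mod_cast Nat.card_fin m ▸ Nat.card_fin n ▸ card_rank_eq_rows_mem_cols_mem_le
      (hammingBall (Fin n) K (c * n)) (hammingBall (Fin m) K (c * m)) R
  rcases isEmpty_or_nonempty
    {Z : Matrix (Fin m) (Fin n) K // Z.rank = R ∧ UniformLowWeight c Z} with _ | ⟨Z, hrank, hZ⟩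
  · rw [Nat.card_of_isEmpty]
    simp only [Nat.cast_zero, mul_zero]
    positivity
  rcases eq_or_ne R 0 with rfl | hR
  · simpa using hcount
  have hZ0 : Z ≠ 0 := by
    rintro rfl
    exact hR (hrank.symm.trans rank_zero)
  obtain ⟨hm, hn⟩ := hZ.one_le_mul_of_ne_zero hZ0
  calc _ ≤ 2 ^ R * (m * B m * (n * B n) : ℝ) ^ R := by gcongr
    _ = (2 * (m * B m) * (n * B n) : ℝ) ^ R := by rw [← mul_pow, mul_assoc (2 : ℝ)]
    _ ≤ (2 * (m * B m) * (2 * (n * B n)) : ℝ) ^ R := by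
      have : (n * B n : ℝ) ≤ 2 * (n * B n) := le_mul_of_one_le_left (by positivity) one_le_two
      gcongr
    _ ≤ (b ^ m * b ^ n) ^ R := by
      gcongr
      · exact hball m hm
      · exact hball n hn
    _ = b ^ ((m + n) * R) := by rw [← pow_add, ← pow_mul]

end LowWeight

theorem uniform_low_weight_probability_bound_general (K : Type*) [Field K] [Fintype K]
    [DecidableEq K] {ε : ℝ} (hε : 0 < ε) : ∃ c : ℝ, 0 < c ∧ ∀ m n R : ℕ,
      (Nat.card {Z : Matrix (Fin m) (Fin n) K // Z.rank = R ∧ UniformLowWeight c Z} : ℝ) ≤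
        (Fintype.card K : ℝ) ^ ((R : ℝ) ^ 2 - (1 - ε) * (m + n) * R) *
          Nat.card {Z : Matrix (Fin m) (Fin n) K // Z.rank = R} := by
  set q : ℝ := (Fintype.card K : ℝ) with hq_def
  have hq : 1 < q := Nat.one_lt_cast.2 Fintype.one_lt_card
  have hq0 : 0 < q := zero_lt_one.trans hq
  obtain ⟨c, hc, hupper⟩ :=
    exists_two_pow_mul_card_rank_eq_uniformLowWeight_le K (Real.one_lt_rpow hq hε)
  refine ⟨c, hc, fun m n R ↦ ?_⟩
  rcases isEmpty_or_nonempty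
    {Z : Matrix (Fin m) (Fin n) K // Z.rank = R ∧ UniformLowWeight c Z} with _ | ⟨Z, hrank, -⟩
  · rw [Nat.card_of_isEmpty, Nat.cast_zero]
    positivity
  set N := Nat.card {Z : Matrix (Fin m) (Fin n) K // Z.rank = R}
  have hlower : q ^ ((m + n) * R) ≤ 2 ^ R * q ^ R ^ 2 * N := by
    rw [hq_def]
    exact_mod_cast card_pow_le_mul_card_rank_eq (K := K)
      (hrank ▸ Z.rank_le_height) (hrank ▸ Z.rank_le_width)
  set e : ℝ := (R : ℝ) ^ 2 - (1 - ε) * (m + n) * R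
  have hexponent : (q ^ ε) ^ ((m + n) * R) * q ^ R ^ 2 = q ^ e * q ^ ((m + n) * R) := by
    simp only [← Real.rpow_natCast, ← Real.rpow_mul hq0.le, ← Real.rpow_add hq0]
    congr 1
    push_cast [e]
    ring
  refine le_of_mul_le_mul_left ?_ (show 0 < 2 ^ R * q ^ R ^ 2 by positivity)
  calc _ = 2 ^ R * (Nat.card {Z : Matrix (Fin m) (Fin n) K //
          Z.rank = R ∧ UniformLowWeight c Z} : ℝ) * q ^ R ^ 2 := by ring
    _ ≤ (q ^ ε) ^ ((m + n) * R) * q ^ R ^ 2 := by gcongr; exact hupper m n R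
    _ = q ^ e * q ^ ((m + n) * R) := hexponent
    _ ≤ q ^ e * (2 ^ R * q ^ R ^ 2 * N) := by gcongr
    _ = _ := by ring

/-- For a uniformly random rank-`R` matrix of size `M×M` over `ZMod 2`, the probability
that every row and every column has weight at most `cM` is at most
`C·2^{R² − 2(1−ε)MR}`, stated as a counting bound: the number of rank-`R` matrices
obeying the uniform low weight condition is at most `C·2^{R² − 2(1−ε)MR}·N_R`, where
`N_R` is the total number of rank-`R` matrices. -/
theorem uniform_low_weight_probability_bound :
    ∀ ε : ℝ, 0 < ε → ∃ c : ℝ, 0 < c ∧ ∃ C : ℝ, 0 < C ∧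
      ∀ M R : ℕ, 1 ≤ R → R ≤ M →
        (Nat.card {Z : Matrix (Fin M) (Fin M) (ZMod 2) // Z.rank = R ∧
            (∀ i : Fin M, ((Finset.univ.filter fun j => Z i j ≠ 0).card : ℝ) ≤ c * M) ∧
            (∀ j : Fin M, ((Finset.univ.filter fun i => Z i j ≠ 0).card : ℝ) ≤ c * M)} :
          ℝ) ≤
        C * (2 : ℝ) ^ ((R : ℝ) ^ 2 - 2 * (1 - ε) * (M : ℝ) * (R : ℝ)) *
          (Nat.card {Z : Matrix (Fin M) (Fin M) (ZMod 2) // Z.rank = R} : ℝ) := by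
  intro ε hε
  obtain ⟨c, hc, hbound⟩ := uniform_low_weight_probability_bound_general (ZMod 2) hε
  refine ⟨c, hc, 1, one_pos, fun M R _ _ ↦ ?_⟩
  simpa only [ZMod.card, Nat.cast_ofNat, one_mul, ← two_mul, mul_left_comm _ (2 : ℝ), mul_assoc]
    using! hbound M M R
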